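/- arXiv:1811.10163 — 2 statements merged into one kernel-verified Lean document; each statement's English description precedes it below -/
import Mathlib

section
/- Let 1<p<∞, 0<α<n/p, 0 < t ≤ 1, and let σ be a nonzero nonnegative locally finite Borel measure on ℝⁿ. Then there exists a constant c = c(t,p,n,α) > 0 such that for all x ∈ ℝⁿ: (W_{α,p}σ(x))^t ≥ c · W_{α,p}((W_{α,p}σ)^{(t−1)(p−1)} dσ)(x). -/
/-!
Write `W = wolffPot n α p σ`, `h` for the integrand of `W x` as a function of the radius, and
`F r = ∫_r^∞ h`, so that `F 0 = W x`.

For `y ∈ B(x, r)` and `ρ > r` one has `B(x, ρ) ⊆ B(y, 2ρ)`, hence `W y ≥ K * F r` with a constant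
`K` depending only on `n, α, p` (`tail_le_wolffPot`). The exponent `(t - 1) * (p - 1)` is
nonpositive, so the weighted measure of `B(x, r)` is at most
`(K * F r) ^ ((t - 1) * (p - 1)) * σ (B(x, r))`, and the integrand of its potential at `x` is at
most `K ^ (t - 1) * F r ^ (t - 1) * h r` (`wolffIntegrand_withDensity_le`).

It remains to see that `∫_0^∞ F ^ (t - 1) * h ≤ C * F 0 ^ t`
(`lintegral_tail_rpow_mul_le`). Formally this is `h = -F'`; the proof decomposes `(0, ∞)` into
the sets where `F` is comparable to `2 ^ (-k) * F 0`. The set `{F ≤ l}` carries `h`-mass at most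
`l`, so the `k`-th piece contributes at most a constant times `2 ^ (-k * t) * F 0 ^ t`, and the
geometric series converges because `t > 0`. When `W x = ∞` there is nothing to prove, and `F` never
vanishes because `σ ≠ 0`.
-/

open MeasureTheory Metric Set ENNReal

/-- The Wolff potential `W_{α,p}μ(x) = ∫_0^∞ (μ(B(x,r))/r^{n-αp})^{1/(p-1)} dr/r`. -/
noncomputable def wolffPot (n : ℕ) (α p : ℝ)
    (μ : Measure (EuclideanSpace ℝ (Fin n))) (x : EuclideanSpace ℝ (Fin n)) : ℝ≥0∞ :=
  ∫⁻ r in Ioi (0 : ℝ),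
    (μ (ball x r) / ENNReal.ofReal (r ^ ((n : ℝ) - α * p))) ^ (1 / (p - 1)) *
      ENNReal.ofReal r⁻¹

theorem rpow_neg_anti {a b : ℝ≥0∞} (h : a ≤ b) {e : ℝ} (he : e ≤ 0) : b ^ e ≤ a ^ e := by
  obtain ⟨s, rfl⟩ : ∃ s, e = -s := ⟨-e, by ring⟩
  rw [ENNReal.rpow_neg, ENNReal.rpow_neg]
  exact ENNReal.inv_le_inv.2 (ENNReal.rpow_le_rpow h (by linarith))

theorem tail_antitone (h : ℝ → ℝ≥0∞) : Antitone fun r : ℝ => ∫⁻ u in Ioi r, h u :=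
  fun _ _ hab => lintegral_mono_set (Ioi_subset_Ioi hab)

/-- The part of the mass of `h` lying where its tail integral is at most `l` has mass at most `l`:
that part is a half-line, on whose interior points the tail integral is at most `l`. -/
theorem lintegral_sublevel_tail_le (h : ℝ → ℝ≥0∞) (l : ℝ≥0∞) :
    ∫⁻ r in {r : ℝ | ∫⁻ u in Ioi r, h u ≤ l} ∩ Ioi 0, h r ≤ l := by
  set S : Set ℝ := {r : ℝ | ∫⁻ u in Ioi r, h u ≤ l} ∩ Ioi 0 with hS
  rcases S.eq_empty_or_nonempty with h0 | hne
  · simp [h0]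
  have hbdd : BddBelow S := ⟨0, fun r hr => le_of_lt hr.2⟩
  obtain ⟨u, hu, hlim, huS⟩ := exists_seq_tendsto_sInf hne hbdd
  have hsub : S ⊆ Ici (sInf S) := fun r hr => csInf_le hbdd hr
  calc ∫⁻ r in S, h r ≤ ∫⁻ r in Ici (sInf S), h r := lintegral_mono_set hsub
    _ = ∫⁻ r in Ioi (sInf S), h r := setLIntegral_congr Ioi_ae_eq_Ici.symm
    _ = ∫⁻ r in ⋃ n, Ioi (u n), h r := by
      rw [(isGLB_of_tendsto_atTop hu hlim).iUnion_Ioi_eq]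
    _ = ⨆ n, ∫⁻ r in Ioi (u n), h r := by
      refine setLIntegral_iUnion_of_directed _ (Monotone.directed_le ?_)
      exact fun i j hij => Ioi_subset_Ioi (hu hij)
    _ ≤ l := iSup_le fun n => (huS n).1

theorem exists_dyadic {f A : ℝ≥0∞} (hf : f ≠ 0) (hfA : f ≤ A) (hA : A ≠ ∞) :
    ∃ k : ℕ, A * 2⁻¹ ^ k * 2⁻¹ ≤ f ∧ f ≤ A * 2⁻¹ ^ k := by
  lift A to NNReal using hA
  lift f to NNReal using (ne_top_of_le_ne_top ENNReal.coe_ne_top hfA)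
  have hf' : 0 < f := by
    rw [pos_iff_ne_zero]; exact_mod_cast hf
  have hfA' : f ≤ A := by exact_mod_cast hfA
  have hA : 0 < A := hf'.trans_le hfA'
  obtain ⟨k, h1, h2⟩ := exists_nat_pow_near_of_lt_one (x := f / A) (y := (2⁻¹ : NNReal))
    (by positivity) ((div_le_one hA).2 hfA') (by positivity) (inv_lt_one_of_one_lt₀ one_lt_two)
  rw [lt_div_iff₀ hA] at h1
  rw [div_le_iff₀ hA] at h2
  have e2 : (2⁻¹ : ℝ≥0∞) = ((2⁻¹ : NNReal) : ℝ≥0∞) := by simp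
  refine ⟨k, ?_, ?_⟩
  · rw [e2]
    have : A * 2⁻¹ ^ k * 2⁻¹ ≤ f := by
      calc A * 2⁻¹ ^ k * 2⁻¹ = 2⁻¹ ^ (k + 1) * A := by ring
        _ ≤ f := h1.le
    exact_mod_cast this
  · rw [e2]
    have : f ≤ A * 2⁻¹ ^ k := by rw [mul_comm]; exact h2
    exact_mod_cast this

/-- With `F r = ∫_r^∞ h`, this is the bound `∫_0^∞ F ^ (t - 1) * h ≤ C * F 0 ^ t`, which formally
comes from integrating `-(F ^ t)' = t * F ^ (t - 1) * h`. It is obtained without differentiation,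
by splitting `(0, ∞)` dyadically according to the size of `F`. -/
theorem lintegral_tail_rpow_mul_le (t : ℝ) (ht0 : 0 < t) (ht : t ≤ 1) :
    ∃ C : ℝ≥0∞, C ≠ ∞ ∧ ∀ h : ℝ → ℝ≥0∞, Measurable h → (∫⁻ r in Ioi (0 : ℝ), h r) ≠ ∞ →
      (∀ r : ℝ, 0 < r → (∫⁻ u in Ioi r, h u) ≠ 0) →
      ∫⁻ r in Ioi (0 : ℝ), (∫⁻ u in Ioi r, h u) ^ (t - 1) * h r ≤
        C * (∫⁻ r in Ioi (0 : ℝ), h r) ^ t := by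
  have hhalf : (2⁻¹ : ℝ≥0∞) ≠ 0 := by simp
  have hhalf' : (2⁻¹ : ℝ≥0∞) ≠ ∞ := by simp
  refine ⟨(2⁻¹ : ℝ≥0∞) ^ (t - 1) * (1 - (2⁻¹ : ℝ≥0∞) ^ t)⁻¹, ?_, ?_⟩
  · refine ENNReal.mul_ne_top (ENNReal.rpow_ne_top_of_nonneg' (by simp) hhalf') ?_
    rw [Ne, ENNReal.inv_eq_top, tsub_eq_zero_iff_le, not_le]
    exact ENNReal.rpow_lt_one (by simp [ENNReal.inv_lt_one]) ht0
  intro h hm hA hpos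
  set F : ℝ → ℝ≥0∞ := fun r => ∫⁻ u in Ioi r, h u with hF
  set A := ∫⁻ r in Ioi (0 : ℝ), h r with hAdef
  have hA0 : A ≠ 0 := fun h0 =>
    hpos 1 one_pos (le_antisymm (h0 ▸ tail_antitone h zero_le_one) zero_le)
  have hFm : Measurable F := (tail_antitone h).measurable
  let B : ℕ → ℝ≥0∞ := fun k => A * 2⁻¹ ^ k
  have hB0 : ∀ k, B k ≠ 0 := fun k => mul_ne_zero hA0 (pow_ne_zero _ hhalf)
  have hBt : ∀ k, B k ≠ ∞ := fun k => ENNReal.mul_ne_top hA (ENNReal.pow_ne_top hhalf')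
  let S : ℕ → Set ℝ := fun k => {r | F r ≤ B k}
  have hSm : ∀ k, MeasurableSet (S k) := fun k => measurableSet_le hFm measurable_const
  have hpt : ∀ r ∈ Ioi (0 : ℝ), F r ^ (t - 1) * h r ≤
      ∑' k, (S k).indicator (fun r => (B k * 2⁻¹) ^ (t - 1) * h r) r := by
    intro r hr
    obtain ⟨k, h1, h2⟩ := exists_dyadic (hpos r hr) (tail_antitone h (le_of_lt hr)) hA
    refine le_trans ?_ (ENNReal.le_tsum k)
    rw [indicator_of_mem (show r ∈ S k from h2)]
    exact mul_le_mul_left (rpow_neg_anti h1 (by linarith)) _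
  calc ∫⁻ r in Ioi (0 : ℝ), F r ^ (t - 1) * h r
      ≤ ∫⁻ r in Ioi (0 : ℝ), ∑' k, (S k).indicator (fun r => (B k * 2⁻¹) ^ (t - 1) * h r) r :=
        setLIntegral_mono' measurableSet_Ioi hpt
    _ = ∑' k, ∫⁻ r in Ioi (0 : ℝ), (S k).indicator (fun r => (B k * 2⁻¹) ^ (t - 1) * h r) r :=
        lintegral_tsum fun k => ((hm.const_mul _).indicator (hSm k)).aemeasurable
    _ ≤ ∑' k : ℕ, (2⁻¹ : ℝ≥0∞) ^ (t - 1) * A ^ t * ((2⁻¹ : ℝ≥0∞) ^ t) ^ k := by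
        refine ENNReal.tsum_le_tsum fun k => ?_
        rw [lintegral_indicator (hSm k), Measure.restrict_restrict (hSm k),
          lintegral_const_mul _ hm]
        calc (B k * 2⁻¹) ^ (t - 1) * ∫⁻ r in S k ∩ Ioi 0, h r
            ≤ (B k * 2⁻¹) ^ (t - 1) * B k :=
              mul_le_mul_right (lintegral_sublevel_tail_le h (B k)) _
          _ = (2⁻¹ : ℝ≥0∞) ^ (t - 1) * B k ^ t := by
              rw [ENNReal.mul_rpow_of_ne_zero (hB0 k) hhalf]
              have : B k ^ t = B k ^ (t - 1) * B k := by
                conv_lhs => rw [show t = (t - 1) + 1 by ring]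
                rw [ENNReal.rpow_add _ _ (hB0 k) (hBt k), ENNReal.rpow_one]
              rw [this]; ring
          _ = _ := by
              have : B k ^ t = A ^ t * ((2⁻¹ : ℝ≥0∞) ^ t) ^ k := by
                simp only [B]
                rw [ENNReal.mul_rpow_of_nonneg _ _ ht0.le, ← ENNReal.rpow_natCast,
                  ← ENNReal.rpow_natCast, ← ENNReal.rpow_mul, ← ENNReal.rpow_mul, mul_comm t]
              rw [this]; ring
    _ = _ := by
        rw [ENNReal.tsum_mul_left, ENNReal.tsum_geometric]; ring

/-- The integrand of `wolffPot`. -/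
noncomputable def wolffIntegrand (n : ℕ) (α p : ℝ)
    (μ : Measure (EuclideanSpace ℝ (Fin n))) (x : EuclideanSpace ℝ (Fin n)) (r : ℝ) : ℝ≥0∞ :=
  (μ (ball x r) / ENNReal.ofReal (r ^ ((n : ℝ) - α * p))) ^ (1 / (p - 1)) * ENNReal.ofReal r⁻¹

theorem measurable_wolffIntegrand (n : ℕ) (α p : ℝ)
    (μ : Measure (EuclideanSpace ℝ (Fin n))) (x : EuclideanSpace ℝ (Fin n)) :
    Measurable (wolffIntegrand n α p μ x) := by
  have h1 : Measurable fun r : ℝ => μ (ball x r) :=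
    Monotone.measurable fun a b hab => measure_mono (ball_subset_ball hab)
  have h2 : Measurable fun r : ℝ => ENNReal.ofReal (r ^ ((n : ℝ) - α * p)) :=
    (measurable_id.pow_const _).ennreal_ofReal
  exact ((h1.div h2).pow_const _).mul measurable_inv.ennreal_ofReal

theorem tail_wolffIntegrand_ne_zero {n : ℕ} {α p : ℝ} (hp : 1 < p)
    {σ : Measure (EuclideanSpace ℝ (Fin n))} (hσ : σ ≠ 0) (x : EuclideanSpace ℝ (Fin n)) (r : ℝ) :
    ∫⁻ u in Ioi r, wolffIntegrand n α p σ x u ≠ 0 := by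
  obtain ⟨N, hN⟩ : ∃ N : ℕ, σ (ball x N) ≠ 0 := by
    by_contra! hcon
    refine hσ (Measure.measure_univ_eq_zero.1 ?_)
    rw [← iUnion_ball_nat x]
    exact measure_iUnion_null hcon
  refine ne_of_gt ((setLIntegral_pos_iff (measurable_wolffIntegrand n α p σ x)).2 ?_)
  have hsub : Ioi (max r (max N 0)) ⊆ Function.support (wolffIntegrand n α p σ x) ∩ Ioi r := by
    intro u hu
    simp only [mem_Ioi, max_lt_iff] at hu
    obtain ⟨h1, h2, h3⟩ := hu
    refine ⟨?_, h1⟩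
    have hb : σ (ball x u) ≠ 0 := fun h0 =>
      hN (measure_mono_null (ball_subset_ball h2.le) h0)
    refine mul_ne_zero ?_ (by simpa using h3)
    have hq : 0 < 1 / (p - 1) := one_div_pos.2 (by linarith)
    rw [Ne, ENNReal.rpow_eq_zero_iff_of_pos hq]
    exact ENNReal.div_ne_zero.2 ⟨hb, ENNReal.ofReal_ne_top⟩
  refine lt_of_lt_of_le ?_ (measure_mono hsub)
  simp

theorem lintegral_Ioi_zero_comp_two_mul (g : ℝ → ℝ≥0∞) (hg : Measurable g) :
    ∫⁻ r in Ioi (0 : ℝ), g r = ∫⁻ r in Ioi (0 : ℝ), 2 * g (2 * r) := by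
  conv_lhs => rw [← Real.smul_map_volume_mul_left (two_ne_zero : (2 : ℝ) ≠ 0)]
  rw [Measure.restrict_smul, lintegral_smul_measure,
    setLIntegral_map measurableSet_Ioi hg (measurable_const_mul 2), lintegral_const_mul]
  · congr 1
    · simp
    · congr 2
      ext r
      simp
  · fun_prop

/-- For `y ∈ B(x, r)` the potential at `y` dominates the tail beyond `r` of the potential at `x`,
because `B(x, ρ) ⊆ B(y, 2ρ)` when `ρ > r`. -/
theorem tail_le_wolffPot {n : ℕ} {α p : ℝ} (hp : 1 < p)
    (σ : Measure (EuclideanSpace ℝ (Fin n))) {x y : EuclideanSpace ℝ (Fin n)} {r : ℝ}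
    (hr : 0 < r) (hy : y ∈ ball x r) :
    (ENNReal.ofReal (2 ^ ((n : ℝ) - α * p)))⁻¹ ^ (1 / (p - 1)) *
      ∫⁻ u in Ioi r, wolffIntegrand n α p σ x u ≤ wolffPot n α p σ y := by
  have hq : 0 ≤ 1 / (p - 1) := (one_div_pos.2 (by linarith)).le
  have hW : wolffPot n α p σ y = ∫⁻ u in Ioi (0 : ℝ), wolffIntegrand n α p σ y u := rfl
  rw [hW, lintegral_Ioi_zero_comp_two_mul _ (measurable_wolffIntegrand n α p σ y),
    ← lintegral_const_mul _ (measurable_wolffIntegrand n α p σ x)]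
  refine le_trans ?_ (lintegral_mono_set (Ioi_subset_Ioi hr.le))
  refine setLIntegral_mono' measurableSet_Ioi fun u hu => ?_
  rw [mem_Ioi] at hu
  have hu0 : 0 < u := hr.trans hu
  have hball : ball x u ⊆ ball y (2 * u) := by
    refine ball_subset_ball' ?_
    rw [mem_ball, dist_comm] at hy
    linarith
  have hinv : 2 * ENNReal.ofReal (2 * u)⁻¹ = ENNReal.ofReal u⁻¹ := by
    rw [show (2 : ℝ≥0∞) = ENNReal.ofReal 2 by simp, ← ENNReal.ofReal_mul (by norm_num)]
    congr 1
    field_simp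
  have hpow : ENNReal.ofReal ((2 * u) ^ ((n : ℝ) - α * p)) =
      ENNReal.ofReal (2 ^ ((n : ℝ) - α * p)) * ENNReal.ofReal (u ^ ((n : ℝ) - α * p)) := by
    rw [← ENNReal.ofReal_mul (by positivity), Real.mul_rpow (by norm_num) hu0.le]
  unfold wolffIntegrand
  rw [mul_left_comm 2, hinv, ← mul_assoc, ← ENNReal.mul_rpow_of_nonneg _ _ hq, hpow]
  refine mul_le_mul_left (ENNReal.rpow_le_rpow ?_ hq) _
  rw [div_eq_mul_inv, div_eq_mul_inv,
    ENNReal.mul_inv (Or.inr ENNReal.ofReal_ne_top) (Or.inl ENNReal.ofReal_ne_top), mul_left_comm]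
  exact mul_le_mul_left (measure_mono hball) _

/-- Pointwise in the radius, weighting `σ` by a negative power of its potential multiplies the
integrand of the potential by at most a constant times `F r ^ (t - 1)`, with `F` the tail. -/
theorem wolffIntegrand_withDensity_le {n : ℕ} {α p t : ℝ} (hp : 1 < p) (ht : t ≤ 1)
    (σ : Measure (EuclideanSpace ℝ (Fin n))) (x : EuclideanSpace ℝ (Fin n)) {K : ℝ≥0∞}
    (hK : K = (ENNReal.ofReal (2 ^ ((n : ℝ) - α * p)))⁻¹ ^ (1 / (p - 1)))
    {r : ℝ} (hr : 0 < r) :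
    wolffIntegrand n α p
        (σ.withDensity (fun y => (wolffPot n α p σ y) ^ ((t - 1) * (p - 1)))) x r ≤
      (K * ∫⁻ u in Ioi r, wolffIntegrand n α p σ x u) ^ (t - 1) *
        wolffIntegrand n α p σ x r := by
  have hp1 : 0 < p - 1 := by linarith
  have hq : 0 ≤ 1 / (p - 1) := (one_div_pos.2 hp1).le
  set F := ∫⁻ u in Ioi r, wolffIntegrand n α p σ x u with hF
  have h1 : (σ.withDensity (fun y => (wolffPot n α p σ y) ^ ((t - 1) * (p - 1)))) (ball x r) ≤
      (K * F) ^ ((t - 1) * (p - 1)) * σ (ball x r) := by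
    rw [withDensity_apply _ measurableSet_ball, ← setLIntegral_const]
    refine setLIntegral_mono' measurableSet_ball fun y hy => ?_
    refine rpow_neg_anti ?_ (mul_nonpos_of_nonpos_of_nonneg (by linarith) hp1.le)
    rw [hK]
    exact tail_le_wolffPot hp σ hr hy
  have h2 : (K * F) ^ (t - 1) = ((K * F) ^ ((t - 1) * (p - 1))) ^ (1 / (p - 1)) := by
    rw [← ENNReal.rpow_mul]
    congr 1
    field_simp
  unfold wolffIntegrand
  rw [h2, ← mul_assoc, ← ENNReal.mul_rpow_of_nonneg _ _ hq, ← mul_div_assoc]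
  exact mul_le_mul_left (ENNReal.rpow_le_rpow (ENNReal.div_le_div_right h1 _) hq) _

theorem stmt14 {n : ℕ} (p α t : ℝ) (hp : 1 < p) (hα0 : 0 < α) (hα : α < n / p)
    (ht0 : 0 < t) (ht : t ≤ 1) :
    ∃ c : ℝ, 0 < c ∧
      ∀ σ : Measure (EuclideanSpace ℝ (Fin n)), IsLocallyFiniteMeasure σ → σ ≠ 0 →
        ∀ x, ENNReal.ofReal c *
            wolffPot n α p
              (σ.withDensity (fun y => (wolffPot n α p σ y) ^ ((t - 1) * (p - 1)))) x ≤
          (wolffPot n α p σ x) ^ t := by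
  obtain ⟨C, hC, hmain⟩ := lintegral_tail_rpow_mul_le t ht0 ht
  have hq : 0 ≤ 1 / (p - 1) := (one_div_pos.2 (by linarith)).le
  obtain ⟨K, hK⟩ : ∃ K, K = (ENNReal.ofReal (2 ^ ((n : ℝ) - α * p)))⁻¹ ^ (1 / (p - 1)) := ⟨_, rfl⟩
  have h2 : ENNReal.ofReal (2 ^ ((n : ℝ) - α * p)) ≠ 0 :=
    (ENNReal.ofReal_pos.2 (by positivity)).ne'
  have hK0 : K ≠ 0 := by
    rw [hK]
    exact (ENNReal.rpow_pos_of_nonneg (ENNReal.inv_pos.2 ENNReal.ofReal_ne_top) hq).ne'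
  have hKt : K ≠ ∞ := by
    rw [hK]
    exact ENNReal.rpow_ne_top_of_nonneg hq (ENNReal.inv_ne_top.2 h2)
  -- Adding `1` to the constant keeps its inverse finite.
  have hD : K ^ (t - 1) * C + 1 ≠ ∞ := by
    refine ENNReal.add_ne_top.2 ⟨ENNReal.mul_ne_top ?_ hC, ENNReal.one_ne_top⟩
    exact ENNReal.rpow_ne_top_of_nonneg' (pos_iff_ne_zero.2 hK0) hKt
  have hD0 : K ^ (t - 1) * C + 1 ≠ 0 := by simp
  refine ⟨((K ^ (t - 1) * C + 1)⁻¹).toReal,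
    ENNReal.toReal_pos (ENNReal.inv_ne_zero.2 hD) (ENNReal.inv_ne_top.2 hD0), ?_⟩
  intro σ _ hσ x
  rcases eq_or_ne (wolffPot n α p σ x) ∞ with htop | hfin
  · rw [htop, ENNReal.top_rpow_of_pos ht0]
    exact le_top
  rw [ENNReal.ofReal_toReal (ENNReal.inv_ne_top.2 hD0), mul_comm, ← div_eq_mul_inv]
  refine ENNReal.div_le_of_le_mul' ?_
  set h := wolffIntegrand n α p σ x with hh
  have hF0 := fun r : ℝ => tail_wolffIntegrand_ne_zero (α := α) hp hσ x r
  have hm : Measurable h := measurable_wolffIntegrand n α p σ x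
  calc wolffPot n α p (σ.withDensity (fun y => (wolffPot n α p σ y) ^ ((t - 1) * (p - 1)))) x
      ≤ ∫⁻ r in Ioi (0 : ℝ), K ^ (t - 1) * ((∫⁻ u in Ioi r, h u) ^ (t - 1) * h r) := by
        refine setLIntegral_mono' measurableSet_Ioi fun r hr => ?_
        refine (wolffIntegrand_withDensity_le hp ht σ x hK hr).trans_eq ?_
        rw [ENNReal.mul_rpow_of_ne_zero hK0 (hF0 r), mul_assoc]
    _ = K ^ (t - 1) * ∫⁻ r in Ioi (0 : ℝ), (∫⁻ u in Ioi r, h u) ^ (t - 1) * h r :=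
        lintegral_const_mul _ (((tail_antitone h).measurable.pow_const _).mul hm)
    _ ≤ K ^ (t - 1) * (C * (wolffPot n α p σ x) ^ t) :=
        mul_le_mul_right (hmain h hm hfin fun r _ => hF0 r) _
    _ = K ^ (t - 1) * C * (wolffPot n α p σ x) ^ t := by rw [mul_assoc]
    _ ≤ (K ^ (t - 1) * C + 1) * (wolffPot n α p σ x) ^ t := mul_le_mul_left le_self_add _
end

section
/- Let Ω ⊆ ℝⁿ be a nonempty open set, let σ ∈ M⁺(Ω) with σ not the zero measure, and let G be a kernel on Ω satisfying the weak maximum principle with constant h ≥ 1. Then: (i) if t ≥ 1, then (Gσ(x))^t ≤ t h^{t−1} G((Gσ)^{t−1} dσ)(x) for all x ∈ Ω; (ii) if 0 < t ≤ 1, then (Gσ(x))^t ≥ t h^{t−1} G((Gσ)^{t−1} dσ)(x) for all x ∈ Ω. -/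
/-!
Write `u = Gσ`. For `a > 0` the measure `σ` restricted to `{u ≤ a}` has its support (in `Ω`) inside
`{u ≤ a}`, because `u` is lower semicontinuous, and its potential is at most `u ≤ a` there; the
weak maximum principle therefore gives `∫_{u ≤ a} G(x,y) dσ(y) ≤ h a` for every `x ∈ Ω`
(`setLIntegral_sublevel_le`).

Fix `x` and let `ν = G(x,·) σ`, a measure of mass `M = Gσ(x)` with `ν {u ≤ a} ≤ h a`. When
`M < ∞`, this says that the law of `u` under `ν` is stochastically larger than `h` times Lebesgue
measure on `(0, M/h]`, which has the same mass `M`. Comparing the two through the layer cake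
formula applied to the monotone function `s ↦ s^(t-1)` bounds `∫ u^(t-1) dν` from below if `t ≥ 1`
and from above if `t ≤ 1` by
`h ∫₀^{M/h} a^(t-1) da = M^t / (t h^(t-1))`, which is the claim
(`rpow_mass_le` and `le_rpow_mass`).
-/


open MeasureTheory Metric Set ENNReal

/-- The potential `Gσ(x) = ∫_Ω G(x,y) dσ(y)` of a kernel `G` on `Ω`. -/
noncomputable def kernelPot {n : ℕ} (Ω : Set (EuclideanSpace ℝ (Fin n)))
    (G : EuclideanSpace ℝ (Fin n) → EuclideanSpace ℝ (Fin n) → ℝ≥0∞)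
    (μ : Measure (EuclideanSpace ℝ (Fin n))) (x : EuclideanSpace ℝ (Fin n)) : ℝ≥0∞ :=
  ∫⁻ y in Ω, G x y ∂μ

/-- `μ ∈ M⁺(Ω)`: a nonnegative Borel measure living on `Ω`, locally finite on `Ω`. -/
def MemMplus {n : ℕ} (Ω : Set (EuclideanSpace ℝ (Fin n)))
    (μ : Measure (EuclideanSpace ℝ (Fin n))) : Prop :=
  μ Ωᶜ = 0 ∧ ∀ K ⊆ Ω, IsCompact K → μ K < ⊤

/-- A kernel on `Ω`: a positive lower semicontinuous function `Ω × Ω → (0,∞]`. -/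
def IsKernel {n : ℕ} (Ω : Set (EuclideanSpace ℝ (Fin n)))
    (G : EuclideanSpace ℝ (Fin n) → EuclideanSpace ℝ (Fin n) → ℝ≥0∞) : Prop :=
  LowerSemicontinuousOn
      (fun z : EuclideanSpace ℝ (Fin n) × EuclideanSpace ℝ (Fin n) => G z.1 z.2)
      (Ω ×ˢ Ω) ∧
    ∀ x ∈ Ω, ∀ y ∈ Ω, 0 < G x y

/-- The (topological) support of a measure. -/
def msupport {n : ℕ} (μ : Measure (EuclideanSpace ℝ (Fin n))) :
    Set (EuclideanSpace ℝ (Fin n)) :=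
  {x | ∀ U : Set (EuclideanSpace ℝ (Fin n)), IsOpen U → x ∈ U → 0 < μ U}

/-- The weak maximum principle with constant `h` for the kernel `G` on `Ω`. -/
def SatisfiesWMP {n : ℕ} (Ω : Set (EuclideanSpace ℝ (Fin n)))
    (G : EuclideanSpace ℝ (Fin n) → EuclideanSpace ℝ (Fin n) → ℝ≥0∞) (h : ℝ) : Prop :=
  ∀ μ : Measure (EuclideanSpace ℝ (Fin n)), MemMplus Ω μ →
    (∀ x ∈ Ω ∩ msupport μ, kernelPot Ω G μ x ≤ 1) →
    ∀ x ∈ Ω, kernelPot Ω G μ x ≤ ENNReal.ofReal h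

/-- Quasi-symmetry with constant `a ≥ 1`: `a⁻¹ G(y,x) ≤ G(x,y) ≤ a G(y,x)` on `Ω × Ω`. -/
def QuasiSymmetric {n : ℕ} (Ω : Set (EuclideanSpace ℝ (Fin n)))
    (G : EuclideanSpace ℝ (Fin n) → EuclideanSpace ℝ (Fin n) → ℝ≥0∞) (a : ℝ) : Prop :=
  ∀ x ∈ Ω, ∀ y ∈ Ω,
    G y x ≤ ENNReal.ofReal a * G x y ∧ G x y ≤ ENNReal.ofReal a * G y x

/-- The value of the extremal integral: `h ∫₀^{m/h} a^(t-1) da = m^t / (t h^(t-1))`. -/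
lemma extremal_value {h m t : ℝ} (hh : 0 < h) (hm : 0 ≤ m) (ht : 0 < t) :
    ENNReal.ofReal (t * h ^ (t - 1)) *
      (ENNReal.ofReal h * ∫⁻ a in Ioc 0 (m / h), ENNReal.ofReal (a ^ (t - 1))) =
      ENNReal.ofReal m ^ t := by
  have hc : 0 ≤ m / h := by positivity
  have hint : IntegrableOn (fun a : ℝ => a ^ (t - 1)) (Ioc 0 (m / h)) := by
    rw [← intervalIntegrable_iff_integrableOn_Ioc_of_le hc]
    exact intervalIntegral.intervalIntegrable_rpow' (by linarith)
  rw [← ofReal_integral_eq_lintegral_ofReal hint ?_, ← intervalIntegral.integral_of_le hc,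
    integral_rpow (Or.inl (by linarith)), ENNReal.ofReal_rpow_of_nonneg hm ht.le,
    ← ENNReal.ofReal_mul hh.le, ← ENNReal.ofReal_mul (by positivity)]
  · congr 1
    rw [sub_add_cancel, Real.zero_rpow ht.ne', Real.div_rpow hm hh.le, Real.rpow_sub_one hh.ne']
    have := (Real.rpow_pos_of_pos hh t).ne'
    field_simp
    ring
  · refine (ae_restrict_mem measurableSet_Ioc).mono fun a ha => ?_
    exact Real.rpow_nonneg ha.1.le _

/-- Layer cake formula for the extremal integral. -/
lemma extremal_layercake (c p : ℝ) :
    ∫⁻ a in Ioc 0 c, ENNReal.ofReal (a ^ p) =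
      ∫⁻ s in Ioi (0 : ℝ), volume ({a : ℝ | s < a ^ p} ∩ Ioc 0 c) := by
  have hm : Measurable fun a : ℝ => a ^ p := by fun_prop
  rw [lintegral_eq_lintegral_meas_lt _ _ hm.aemeasurable]
  · refine lintegral_congr fun s => ?_
    rw [Measure.restrict_apply (measurableSet_lt measurable_const hm)]
  · refine (ae_restrict_mem measurableSet_Ioc).mono fun a ha => ?_
    exact Real.rpow_nonneg ha.1.le _

/-- If `ν {u ≤ a} ≤ h a` for all `a > 0`, then `ν(univ)^t ≤ t h^(t-1) ∫ u^(t-1) dν` for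
`t ≥ 1`. -/
lemma rpow_mass_le {α : Type*} [MeasurableSpace α] (ν : Measure α) {u : α → ℝ≥0∞}
    (hu : Measurable u) {h : ℝ} (hh : 1 ≤ h)
    (hν : ∀ a : ℝ, 0 < a → ν {y | u y ≤ ENNReal.ofReal a} ≤ ENNReal.ofReal (h * a))
    {t : ℝ} (ht : 1 ≤ t) :
    ν univ ^ t ≤ ENNReal.ofReal (t * h ^ (t - 1)) * ∫⁻ y, u y ^ (t - 1) ∂ν := by
  have hh0 : 0 < h := by linarith
  rcases ht.eq_or_lt with rfl | ht1
  · simp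
  have hK : ENNReal.ofReal (t * h ^ (t - 1)) ≠ 0 := by
    have : 0 < t * h ^ (t - 1) := by positivity
    simpa using this
  have hcompl : ∀ a : ℝ, 0 < a →
      ν univ - ENNReal.ofReal (h * a) ≤ ν {y | ENNReal.ofReal a < u y} := by
    intro a ha
    have hle := measure_univ_le_add_compl (μ := ν) {y | u y ≤ ENNReal.ofReal a}
    have : {y | u y ≤ ENNReal.ofReal a}ᶜ = {y | ENNReal.ofReal a < u y} := by ext; simp
    rw [this] at hle
    exact tsub_le_iff_left.2 (hle.trans (by gcongr; exact hν a ha))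
  by_cases hM : ν univ = ∞
  · -- All of the infinite mass sits above any fixed level, here the level `1`.
    have h1 : ν {y | ENNReal.ofReal 1 < u y} = ∞ := by
      have := hcompl 1 one_pos
      rwa [hM, ENNReal.top_sub ENNReal.ofReal_ne_top, top_le_iff] at this
    have h2 : ∫⁻ y, u y ^ (t - 1) ∂ν = ∞ := by
      rw [← top_le_iff, ← h1, ← setLIntegral_one]
      refine (setLIntegral_mono (hu.pow_const _) fun y hy => ?_).trans
        (setLIntegral_le_lintegral _ _)
      have hy : ENNReal.ofReal 1 < u y := hy
      rw [ENNReal.ofReal_one] at hy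
      exact ENNReal.one_le_rpow hy.le (by linarith)
    rw [h2, ENNReal.mul_top hK]
    exact le_top
  set m := (ν univ).toReal with hm
  have hMm : ν univ = ENNReal.ofReal m := (ENNReal.ofReal_toReal hM).symm
  have hm0 : 0 ≤ m := ENNReal.toReal_nonneg
  set c := m / h with hc
  have hc0 : 0 ≤ c := by positivity
  rw [hMm, ← extremal_value hh0 hm0 (by linarith : 0 < t)]
  gcongr
  -- Truncating `u` at `c` keeps the layer cake formula within real-valued functions.
  have hf : Measurable fun y => (min (u y) (ENNReal.ofReal c)).toReal ^ (t - 1) := by fun_prop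
  have hfle : ∀ y, ENNReal.ofReal ((min (u y) (ENNReal.ofReal c)).toReal ^ (t - 1)) ≤
      u y ^ (t - 1) := by
    intro y
    have hne : min (u y) (ENNReal.ofReal c) ≠ ∞ :=
      ne_top_of_le_ne_top ENNReal.ofReal_ne_top (min_le_right _ _)
    rw [← ENNReal.ofReal_rpow_of_nonneg ENNReal.toReal_nonneg (by linarith),
      ENNReal.ofReal_toReal hne]
    exact ENNReal.rpow_le_rpow (min_le_left _ _) (by linarith)
  refine le_trans ?_ (lintegral_mono hfle)
  rw [lintegral_eq_lintegral_meas_lt ν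
    (Filter.Eventually.of_forall fun y => Real.rpow_nonneg ENNReal.toReal_nonneg _)
    hf.aemeasurable, extremal_layercake, ← lintegral_const_mul' _ _ ENNReal.ofReal_ne_top]
  refine setLIntegral_mono' measurableSet_Ioi fun s hs => ?_
  have hs : 0 < s := hs
  set r := s ^ (t - 1)⁻¹ with hr
  have hr0 : 0 < r := by positivity
  have hrs : r ^ (t - 1) = s := Real.rpow_inv_rpow hs.le (by linarith)
  have hset : {a : ℝ | s < a ^ (t - 1)} ∩ Ioc 0 c ⊆ Ioc r c := by
    rintro a ⟨ha, ha0, hac⟩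
    refine ⟨?_, hac⟩
    have ha : s < a ^ (t - 1) := ha
    rw [← hrs] at ha
    exact (Real.rpow_lt_rpow_iff hr0.le ha0.le (by linarith)).1 ha
  refine (mul_le_mul_right (measure_mono hset) _).trans ?_
  rw [Real.volume_Ioc, ← ENNReal.ofReal_mul hh0.le]
  rcases le_or_gt c r with hcr | hrc
  · rw [ENNReal.ofReal_of_nonpos (by nlinarith)]
    exact zero_le
  have hsub : {y | ENNReal.ofReal r < u y} ⊆
      {y | s < (min (u y) (ENNReal.ofReal c)).toReal ^ (t - 1)} := by
    intro y hy
    have hy : ENNReal.ofReal r < u y := hy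
    have hne : min (u y) (ENNReal.ofReal c) ≠ ∞ :=
      ne_top_of_le_ne_top ENNReal.ofReal_ne_top (min_le_right _ _)
    have : r < (min (u y) (ENNReal.ofReal c)).toReal := by
      rw [← ENNReal.ofReal_lt_iff_lt_toReal hr0.le hne]
      exact lt_min hy ((ENNReal.ofReal_lt_ofReal_iff (by linarith)).2 hrc)
    show s < _
    rw [← hrs]
    exact Real.rpow_lt_rpow hr0.le this (by linarith)
  refine le_trans ?_ (measure_mono hsub)
  refine le_trans ?_ (hcompl r hr0)
  rw [hMm, ← ENNReal.ofReal_sub _ (by positivity), mul_sub, hc, mul_div_cancel₀ _ hh0.ne.symm]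

/-- If `ν {u ≤ a} ≤ h a` for all `a > 0`, then `t h^(t-1) ∫ u^(t-1) dν ≤ ν(univ)^t` for
`0 < t ≤ 1`. The hypothesis forces `u > 0` almost everywhere, so the value `0^(t-1) = ∞` does not
contribute. -/
lemma le_rpow_mass {α : Type*} [MeasurableSpace α] (ν : Measure α) {u : α → ℝ≥0∞}
    (hu : Measurable u) {h : ℝ} (hh : 1 ≤ h)
    (hν : ∀ a : ℝ, 0 < a → ν {y | u y ≤ ENNReal.ofReal a} ≤ ENNReal.ofReal (h * a))
    {t : ℝ} (ht0 : 0 < t) (ht : t ≤ 1) :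
    ENNReal.ofReal (t * h ^ (t - 1)) * ∫⁻ y, u y ^ (t - 1) ∂ν ≤ ν univ ^ t := by
  have hh0 : 0 < h := by linarith
  rcases ht.eq_or_lt with rfl | ht1
  · simp
  by_cases hM : ν univ = ∞
  · rw [hM, ENNReal.top_rpow_of_pos ht0]
    exact le_top
  have hpos : ∀ᵐ y ∂ν, u y ≠ 0 := by
    rw [ae_iff]
    simp only [ne_eq, not_not]
    refine le_antisymm (ENNReal.le_of_forall_pos_le_add fun ε hε _ => ?_) zero_le
    rw [zero_add]
    have hε' : (0 : ℝ) < ε := hε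
    have := hν (ε / h) (by positivity)
    rw [mul_div_cancel₀ _ hh0.ne', ENNReal.ofReal_coe_nnreal] at this
    refine (measure_mono ?_).trans this
    intro y hy
    have hy : u y = 0 := hy
    simp [hy]
  set m := (ν univ).toReal with hm
  have hMm : ν univ = ENNReal.ofReal m := (ENNReal.ofReal_toReal hM).symm
  have hm0 : 0 ≤ m := ENNReal.toReal_nonneg
  set c := m / h with hc
  have hc0 : 0 ≤ c := by positivity
  rw [hMm, ← extremal_value hh0 hm0 ht0]
  gcongr
  have hf : Measurable fun y => (u y).toReal ^ (t - 1) := by fun_prop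
  have hfeq : ∫⁻ y, u y ^ (t - 1) ∂ν = ∫⁻ y, ENNReal.ofReal ((u y).toReal ^ (t - 1)) ∂ν := by
    refine lintegral_congr_ae (hpos.mono fun y hy => ?_)
    show u y ^ (t - 1) = ENNReal.ofReal ((u y).toReal ^ (t - 1))
    rw [ENNReal.toReal_rpow, ENNReal.ofReal_toReal]
    intro htop
    rcases ENNReal.rpow_eq_top_iff.1 htop with h1 | h1
    · exact hy h1.1
    · linarith [h1.2]
  rw [hfeq, lintegral_eq_lintegral_meas_lt ν
    (Filter.Eventually.of_forall fun y => Real.rpow_nonneg ENNReal.toReal_nonneg _)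
    hf.aemeasurable, extremal_layercake, ← lintegral_const_mul' _ _ ENNReal.ofReal_ne_top]
  refine setLIntegral_mono' measurableSet_Ioi fun s hs => ?_
  have hs : 0 < s := hs
  set r := s ^ (t - 1)⁻¹ with hr
  have hr0 : 0 < r := by positivity
  have hrs : r ^ (t - 1) = s := Real.rpow_inv_rpow hs.le (by linarith)
  have hset : Ioo 0 (min c r) ⊆ {a : ℝ | s < a ^ (t - 1)} ∩ Ioc 0 c := by
    rintro a ⟨ha0, ha⟩
    refine ⟨?_, ha0, (ha.trans_le (min_le_left _ _)).le⟩
    show s < a ^ (t - 1)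
    rw [← hrs]
    exact Real.rpow_lt_rpow_of_neg ha0 (ha.trans_le (min_le_right _ _)) (by linarith)
  refine le_trans ?_ (mul_le_mul_right (measure_mono hset) _)
  rw [Real.volume_Ioo, ← ENNReal.ofReal_mul hh0.le, sub_zero, mul_min_of_nonneg _ _ hh0.le,
    ENNReal.ofReal_min, hc, mul_div_cancel₀ _ hh0.ne', ← hMm]
  refine le_min (measure_mono (subset_univ _)) ((measure_mono ?_).trans (hν r hr0))
  intro y hy
  have hy : s < (u y).toReal ^ (t - 1) := hy
  have htop : u y ≠ ∞ := by
    intro htop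
    rw [htop, ENNReal.toReal_top, Real.zero_rpow (by linarith)] at hy
    linarith
  show u y ≤ ENNReal.ofReal r
  rw [ENNReal.le_ofReal_iff_toReal_le htop hr0.le]
  by_contra hlt
  push Not at hlt
  have := Real.rpow_le_rpow_of_nonpos hr0 hlt.le (by linarith : t - 1 ≤ 0)
  linarith

/-- A kernel extended by zero outside `Ω × Ω` is lower semicontinuous on the whole space. -/
lemma IsKernel.lowerSemicontinuous_indicator {n : ℕ} {Ω : Set (EuclideanSpace ℝ (Fin n))}
    (hΩ : IsOpen Ω) {G : EuclideanSpace ℝ (Fin n) → EuclideanSpace ℝ (Fin n) → ℝ≥0∞}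
    (hG : IsKernel Ω G) :
    LowerSemicontinuous ((Ω ×ˢ Ω).indicator fun z => G z.1 z.2) := by
  intro z a ha
  by_cases hz : z ∈ Ω ×ˢ Ω
  · have hΩΩ : Ω ×ˢ Ω ∈ nhds z := (hΩ.prod hΩ).mem_nhds hz
    rw [indicator_of_mem hz] at ha
    have := hG.1 z hz a ha
    rw [nhdsWithin_eq_nhds.2 hΩΩ] at this
    filter_upwards [this, hΩΩ] with w hw hwΩ
    rwa [indicator_of_mem hwΩ]
  · rw [indicator_of_notMem hz] at ha
    exact absurd ha ENNReal.not_lt_zero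

/-- Fatou's lemma: potentials of lower semicontinuous functions are lower semicontinuous. -/
lemma lowerSemicontinuous_potential {E : Type*} [TopologicalSpace E] [FirstCountableTopology E]
    [SecondCountableTopology E] [MeasurableSpace E] [BorelSpace E] {F : E × E → ℝ≥0∞}
    (hF : LowerSemicontinuous F) (μ : Measure E) :
    LowerSemicontinuous fun x => ∫⁻ y, F (x, y) ∂μ := by
  rw [lowerSemicontinuous_iff_le_liminf]
  intro x
  have hmeas : ∀ x', Measurable fun y => F (x', y) := fun x' =>
    hF.measurable.comp measurable_prodMk_left
  refine le_trans (lintegral_mono fun y => ?_) (lintegral_liminf_le hmeas)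
  have hlim : Filter.Tendsto (fun x' => (x', y)) (nhds x) (nhds (x, y)) :=
    (Continuous.prodMk_left y).tendsto x
  exact (hF.le_liminf (x, y)).trans (Filter.liminf_le_liminf_of_le hlim)

/-- The mass which `G(x,·) σ` puts on a sublevel set of `Gσ` is controlled by the level: the
restriction of `σ` to `{Gσ ≤ a}`, divided by `a`, is admissible in the weak maximum principle. -/
lemma setLIntegral_sublevel_le {n : ℕ} {h : ℝ} {Ω : Set (EuclideanSpace ℝ (Fin n))}
    {σ : Measure (EuclideanSpace ℝ (Fin n))} (hσ : MemMplus Ω σ)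
    {G : EuclideanSpace ℝ (Fin n) → EuclideanSpace ℝ (Fin n) → ℝ≥0∞}
    (hwmp : SatisfiesWMP Ω G h) {u : EuclideanSpace ℝ (Fin n) → ℝ≥0∞}
    (hu : LowerSemicontinuous u) (huG : ∀ x ∈ Ω, u x = kernelPot Ω G σ x)
    {a : ℝ} (ha : 0 < a) {x : EuclideanSpace ℝ (Fin n)} (hx : x ∈ Ω) :
    ∫⁻ y in Ω, G x y ∂(σ.restrict {y | u y ≤ ENNReal.ofReal a}) ≤ ENNReal.ofReal (h * a) := by
  have hA0 : ENNReal.ofReal a ≠ 0 := by simpa using ha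
  have hAt : ENNReal.ofReal a ≠ ∞ := ENNReal.ofReal_ne_top
  set A := ENNReal.ofReal a
  set E := {y | u y ≤ A}
  set μ := A⁻¹ • σ.restrict E with hμ
  have hpot : ∀ z, kernelPot Ω G μ z = A⁻¹ * ∫⁻ y in Ω, G z y ∂(σ.restrict E) := by
    intro z
    rw [kernelPot, hμ, Measure.restrict_smul, lintegral_smul_measure, smul_eq_mul]
  have hμσ : ∀ S, μ S ≤ A⁻¹ * σ S := by
    intro S
    rw [hμ, Measure.smul_apply, smul_eq_mul]
    gcongr
    exact Measure.restrict_le_self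
  have hmem : MemMplus Ω μ := by
    refine ⟨?_, fun K hK hKc => ?_⟩
    · refine le_antisymm ((hμσ _).trans ?_) zero_le
      simp [hσ.1]
    · exact (hμσ K).trans_lt
        (ENNReal.mul_lt_top (ENNReal.inv_lt_top.2 (pos_iff_ne_zero.2 hA0)) (hσ.2 K hK hKc))
  have hsupp : ∀ z ∈ Ω ∩ msupport μ, kernelPot Ω G μ z ≤ 1 := by
    rintro z ⟨hzΩ, hz⟩
    have hzE : u z ≤ A := by
      by_contra hlt
      push Not at hlt
      have hU : IsOpen (u ⁻¹' Ioi A) := hu.isOpen_preimage A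
      refine (hz _ hU hlt).ne' ?_
      rw [hμ, Measure.smul_apply, Measure.restrict_apply hU.measurableSet]
      have : u ⁻¹' Ioi A ∩ E = ∅ := by
        ext y
        simp [E]
      simp [this]
    rw [hpot]
    calc A⁻¹ * ∫⁻ y in Ω, G z y ∂(σ.restrict E) ≤ A⁻¹ * A := by
          gcongr
          refine le_trans ?_ hzE
          rw [huG z hzΩ, kernelPot]
          exact lintegral_mono' (Measure.restrict_mono_measure Measure.restrict_le_self Ω) le_rfl
      _ = 1 := ENNReal.inv_mul_cancel hA0 hAt
  have key := hwmp μ hmem hsupp x hx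
  rw [hpot, ENNReal.inv_mul_le_iff hA0 hAt] at key
  rwa [mul_comm h a, ENNReal.ofReal_mul ha.le]

theorem stmt17 {n : ℕ} (h : ℝ)
    (Ω : Set (EuclideanSpace ℝ (Fin n))) (hΩo : IsOpen Ω) (hΩne : Ω.Nonempty)
    (σ : Measure (EuclideanSpace ℝ (Fin n))) (hσ : MemMplus Ω σ) (hσ0 : σ ≠ 0)
    (G : EuclideanSpace ℝ (Fin n) → EuclideanSpace ℝ (Fin n) → ℝ≥0∞)
    (hker : IsKernel Ω G) (hh : 1 ≤ h) (hwmp : SatisfiesWMP Ω G h) :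
    (∀ t : ℝ, 1 ≤ t → ∀ x ∈ Ω,
        (kernelPot Ω G σ x) ^ t ≤
          ENNReal.ofReal (t * h ^ (t - 1)) *
            kernelPot Ω G (σ.withDensity (fun y => (kernelPot Ω G σ y) ^ (t - 1))) x) ∧
      (∀ t : ℝ, 0 < t → t ≤ 1 → ∀ x ∈ Ω,
        ENNReal.ofReal (t * h ^ (t - 1)) *
            kernelPot Ω G (σ.withDensity (fun y => (kernelPot Ω G σ y) ^ (t - 1))) x ≤
          (kernelPot Ω G σ x) ^ t) := by
  -- Extension by zero makes kernel and potential lower semicontinuous, hence measurable, everywhere.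
  set F := (Ω ×ˢ Ω).indicator fun z => G z.1 z.2 with hFdef
  have hF : LowerSemicontinuous F := hker.lowerSemicontinuous_indicator hΩo
  have hFG : ∀ x ∈ Ω, ∀ y ∈ Ω, F (x, y) = G x y := fun x hx y hy =>
    indicator_of_mem (show (x, y) ∈ Ω ×ˢ Ω from ⟨hx, hy⟩) _
  have hFm : ∀ x, Measurable fun y => F (x, y) := fun x =>
    hF.measurable.comp measurable_prodMk_left
  have hΩm := hΩo.measurableSet
  set u := fun x => ∫⁻ y, F (x, y) ∂(σ.restrict Ω) with hudef
  have hu : LowerSemicontinuous u := lowerSemicontinuous_potential hF _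
  have hum : Measurable u := hu.measurable
  have huG : ∀ x ∈ Ω, u x = kernelPot Ω G σ x := fun x hx =>
    setLIntegral_congr_fun hΩm fun y hy => hFG x hx y hy
  set ν := fun x => (σ.restrict Ω).withDensity fun y => F (x, y) with hνdef
  have hmass : ∀ x ∈ Ω, ν x univ = kernelPot Ω G σ x := by
    intro x hx
    rw [← huG x hx, hνdef, withDensity_apply _ MeasurableSet.univ, Measure.restrict_univ]
  have hsub : ∀ x ∈ Ω, ∀ a : ℝ, 0 < a →
      ν x {y | u y ≤ ENNReal.ofReal a} ≤ ENNReal.ofReal (h * a) := by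
    intro x hx a ha
    have hE : MeasurableSet {y | u y ≤ ENNReal.ofReal a} := measurableSet_le hum measurable_const
    refine le_trans (le_of_eq ?_)
      (setLIntegral_sublevel_le hσ hwmp hu huG ha hx)
    rw [hνdef, withDensity_apply _ hE, Measure.restrict_comm hE]
    exact setLIntegral_congr_fun hΩm fun y hy => hFG x hx y hy
  have hpot : ∀ t : ℝ, ∀ x ∈ Ω,
      kernelPot Ω G (σ.withDensity fun y => kernelPot Ω G σ y ^ (t - 1)) x =
        ∫⁻ y, u y ^ (t - 1) ∂(ν x) := by
    intro t x hx
    have hdens : (σ.restrict Ω).withDensity (fun y => kernelPot Ω G σ y ^ (t - 1)) =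
        (σ.restrict Ω).withDensity (fun y => u y ^ (t - 1)) := by
      refine withDensity_congr_ae ((ae_restrict_mem hΩm).mono fun y hy => ?_)
      show kernelPot Ω G σ y ^ (t - 1) = u y ^ (t - 1)
      rw [huG y hy]
    have hGF : kernelPot Ω G (σ.withDensity fun y => kernelPot Ω G σ y ^ (t - 1)) x =
        ∫⁻ y in Ω, F (x, y) ∂(σ.withDensity fun y => kernelPot Ω G σ y ^ (t - 1)) :=
      setLIntegral_congr_fun hΩm fun y hy => (hFG x hx y hy).symm
    rw [hGF, restrict_withDensity hΩm, hdens,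
      lintegral_withDensity_eq_lintegral_mul _ (hum.pow_const _) (hFm x), hνdef,
      lintegral_withDensity_eq_lintegral_mul _ (hFm x) (hum.pow_const _), mul_comm]
  refine ⟨fun t ht x hx => ?_, fun t ht0 ht x hx => ?_⟩
  · rw [hpot t x hx, ← hmass x hx]
    exact rpow_mass_le (ν x) hum hh (hsub x hx) ht
  · rw [hpot t x hx, ← hmass x hx]
    exact le_rpow_mass (ν x) hum hh (hsub x hx) ht0 ht
end
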